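/- arXiv:math/0303250 — 2 statements merged into one kernel-verified Lean document; each statement's English description precedes it below -/
import Mathlib

section
/- Let m ≥ 1 and 0 ≤ a ≤ m−1 be integers, and for complex q, x with |q| < 1 and 0 < |x| < 1 define W_m^{(a)}(x) = x^{−1}·(Σ_{k₁,…,k_m ≥ 0} (x;q)_{k_m} · x^{k_m} · (∏_{i=1}^{a−1} q^{k_i²−k_i} x^{2k_i} [k_{i+1} choose k_i]_q) · q^{k_a²−k_a} x^{2k_a} [k_{a+1}+1 choose k_a]_q · (∏_{i=a+1}^{m−1} q^{k_i²} x^{2k_i} [k_{i+1} choose k_i]_q) − 1), with the convention k₀ = 0 when a = 0. Then W_m^{(a)} satisfies W_m^{(a)}(x) = 1 + x + x² + ⋯ + x^{2a} − q^{m−a}·x^{2m} − q^{m−a+1}·x^{2m+1}·W_m^{(a)}(q·x). -/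
/-- The finite q-Pochhammer symbol `(x;q)_n = ∏_{i=1}^n (1 - x q^{i-1})`. -/
noncomputable def qPoch (q x : ℂ) (n : ℕ) : ℂ := ∏ i ∈ Finset.range n, (1 - x * q ^ i)

/-- The Gaussian binomial coefficient `[n choose c]_q`. -/
noncomputable def qBinom (q : ℂ) (n c : ℕ) : ℂ :=
  if c ≤ n then qPoch q q n / (qPoch q q c * qPoch q q (n - c)) else 0

/-- Extends a tuple `(k₁,…,k_m)` to all of `ℕ` by `0` (in particular `k₀ = 0`). -/
def Kfun (m : ℕ) (k : Fin m → ℕ) (i : ℕ) : ℕ :=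
  if h : 1 ≤ i ∧ i ≤ m then k ⟨i - 1, by omega⟩ else 0

/-- The summand of the series defining `W_m^{(a)}(x)`:
`(x;q)_{k_m} x^{k_m} (∏_{i=1}^{a-1} q^{k_i²-k_i} x^{2k_i} [k_{i+1},k_i]) ·
 q^{k_a²-k_a} x^{2k_a} [k_{a+1}+1,k_a] · (∏_{i=a+1}^{m-1} q^{k_i²} x^{2k_i} [k_{i+1},k_i])`,
with the convention `k₀ = 0`. -/
noncomputable def Wterm (q x : ℂ) (m a : ℕ) (k : Fin m → ℕ) : ℂ :=
  qPoch q x (Kfun m k m) * x ^ (Kfun m k m) *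
  (∏ i ∈ Finset.Ico 1 a,
    q ^ (Kfun m k i ^ 2 - Kfun m k i) * x ^ (2 * Kfun m k i) *
      qBinom q (Kfun m k (i + 1)) (Kfun m k i)) *
  (q ^ (Kfun m k a ^ 2 - Kfun m k a) * x ^ (2 * Kfun m k a) *
    qBinom q (Kfun m k (a + 1) + 1) (Kfun m k a)) *
  (∏ i ∈ Finset.Ico (a + 1) m,
    q ^ (Kfun m k i ^ 2) * x ^ (2 * Kfun m k i) *
      qBinom q (Kfun m k (i + 1)) (Kfun m k i))

/-- `W_m^{(a)}(x) = x⁻¹ ((Σ_{k₁,…,k_m} Wterm) − 1)`. -/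
noncomputable def Wfun (q : ℂ) (m a : ℕ) (x : ℂ) : ℂ :=
  x⁻¹ * ((∑' k : Fin m → ℕ, Wterm q x m a k) - 1)

/-!
Apart from the factor `(x;q)_{k_m} x^{k_m}`, the nested sum applies the operators
`β ↦ ∑ k, b ^ k q ^ (k² - k) [n, k] β k` one after another to the unit sequence at `0`. By the
Bailey lemma, each of them multiplies the first member `α` of a Bailey pair by `b ^ r q ^ (r² - r)`.
The weights with `i ≤ a` are such operators with `b = x²`, applied to the unit Bailey pair; the
shifted binomial coefficient `[k_{a+1} + 1, k_a]` evaluates `β` at `n + 1`, which trades the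
parameter `b` for `b q`; and the weights with `i > a` are operators with `b = x² q`. The remaining
sum of `β` against `(x;q)_n x ^ n` is evaluated term by term in `α` by the `q`-Gauss sum. The
outcome is a partial theta series whose term `r + 1` at `x` is a constant multiple of its term `r`
at `q x`, so that splitting off the term `r = 0` gives the functional equation.
-/

section Pochhammer

variable {q b : ℂ}

lemma qPoch_zero (q b : ℂ) : qPoch q b 0 = 1 := Finset.prod_range_zero _

lemma qPoch_succ (q b : ℂ) (n : ℕ) : qPoch q b (n + 1) = qPoch q b n * (1 - b * q ^ n) :=
  Finset.prod_range_succ _ _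

lemma qPoch_add (q b : ℂ) (m n : ℕ) :
    qPoch q b (m + n) = qPoch q b m * qPoch q (b * q ^ m) n := by
  simp only [qPoch, Finset.prod_range_add, pow_add, mul_assoc]

lemma qPoch_succ' (q b : ℂ) (n : ℕ) : qPoch q b (n + 1) = (1 - b) * qPoch q (b * q) n := by
  rw [add_comm, qPoch_add, qPoch_succ, qPoch_zero, one_mul, pow_zero, mul_one, pow_one]

lemma one_sub_mul_pow_ne_zero (hb : ∀ n, qPoch q b n ≠ 0) (n : ℕ) : 1 - b * q ^ n ≠ 0 :=
  right_ne_zero_of_mul (qPoch_succ q b n ▸ hb (n + 1))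

lemma one_sub_pow_succ_ne_zero (hq : ∀ n, qPoch q q n ≠ 0) (n : ℕ) : 1 - q ^ (n + 1) ≠ 0 := by
  simpa only [pow_succ'] using one_sub_mul_pow_ne_zero hq n

lemma qPoch_mul_pow_ne_zero (hb : ∀ n, qPoch q b n ≠ 0) (m n : ℕ) :
    qPoch q (b * q ^ m) n ≠ 0 :=
  right_ne_zero_of_mul (qPoch_add q b m n ▸ hb (m + n))

lemma qPoch_mul_ne_zero (hb : ∀ n, qPoch q b n ≠ 0) (n : ℕ) : qPoch q (b * q) n ≠ 0 := by
  simpa only [pow_one] using qPoch_mul_pow_ne_zero hb 1 n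

lemma qPoch_ne_zero (hq : ‖q‖ ≤ 1) (hb : ‖b‖ < 1) (n : ℕ) : qPoch q b n ≠ 0 := by
  refine Finset.prod_ne_zero_iff.2 fun i _ h => ?_
  have hlt : ‖b * q ^ i‖ < 1 := by
    rw [norm_mul, norm_pow]
    exact mul_lt_one_of_nonneg_of_lt_one_left (norm_nonneg b) hb (pow_le_one₀ (norm_nonneg q) hq)
  rw [← sub_eq_zero.1 h, norm_one] at hlt
  exact lt_irrefl 1 hlt

lemma exists_tendsto_qPoch (hq : ‖q‖ < 1) (hb : ∀ n, qPoch q b n ≠ 0) :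
    ∃ l ≠ 0, Filter.Tendsto (fun n => qPoch q b n) Filter.atTop (nhds l) := by
  have hsum : Summable fun i => ‖-(b * q ^ i)‖ := by
    simpa only [norm_neg, norm_mul, norm_pow] using
      (summable_geometric_of_lt_one (norm_nonneg q) hq).mul_left ‖b‖
  have hne (i : ℕ) : 1 + -(b * q ^ i) ≠ 0 := by
    simpa only [sub_eq_add_neg] using one_sub_mul_pow_ne_zero hb i
  refine ⟨_, tprod_one_add_ne_zero_of_summable hne hsum, ?_⟩
  simpa only [qPoch, ← sub_eq_add_neg] using
    (multipliable_one_add_of_summable hsum).hasProd.tendsto_prod_nat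

lemma exists_norm_qPoch_le (hq : ‖q‖ < 1) (hb : ∀ n, qPoch q b n ≠ 0) :
    ∃ C, ∀ n, ‖qPoch q b n‖ ≤ C := by
  obtain ⟨l, -, hl⟩ := exists_tendsto_qPoch hq hb
  simpa using (Metric.isBounded_range_of_tendsto _ hl).exists_norm_le

lemma exists_norm_inv_qPoch_le (hq : ‖q‖ < 1) (hb : ∀ n, qPoch q b n ≠ 0) :
    ∃ C, ∀ n, ‖(qPoch q b n)⁻¹‖ ≤ C := by
  obtain ⟨l, hl₀, hl⟩ := exists_tendsto_qPoch hq hb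
  simpa using (Metric.isBounded_range_of_tendsto _ (hl.inv₀ hl₀)).exists_norm_le

end Pochhammer

section GaussianBinomial

variable {q : ℂ}

lemma qBinom_eq_zero_of_lt {n k : ℕ} (h : n < k) : qBinom q n k = 0 := if_neg h.not_ge

lemma qBinom_of_le {n k : ℕ} (h : k ≤ n) :
    qBinom q n k = qPoch q q n / (qPoch q q k * qPoch q q (n - k)) := if_pos h

lemma qBinom_zero_right (hq : ∀ n, qPoch q q n ≠ 0) (n : ℕ) : qBinom q n 0 = 1 := by
  rw [qBinom_of_le n.zero_le, qPoch_zero, one_mul, Nat.sub_zero, div_self (hq n)]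

lemma qBinom_self (hq : ∀ n, qPoch q q n ≠ 0) (n : ℕ) : qBinom q n n = 1 := by
  rw [qBinom_of_le le_rfl, Nat.sub_self, qPoch_zero, mul_one, div_self (hq n)]

lemma one_sub_pow_succ_mul_qBinom_succ (hq : ∀ n, qPoch q q n ≠ 0) (n k : ℕ) :
    (1 - q ^ (k + 1)) * qBinom q n (k + 1) = (1 - q ^ (n - k)) * qBinom q n k := by
  rcases lt_or_ge k n with h | h
  · obtain ⟨d, rfl⟩ := Nat.exists_eq_add_of_lt h
    have := hq k
    have := hq d
    have := one_sub_pow_succ_ne_zero hq k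
    have := one_sub_pow_succ_ne_zero hq d
    rw [qBinom_of_le h, qBinom_of_le h.le, show k + d + 1 - (k + 1) = d by omega,
      show k + d + 1 - k = d + 1 by omega, qPoch_succ q q k, qPoch_succ q q d, ← pow_succ',
      ← pow_succ']
    field_simp
  · rw [qBinom_eq_zero_of_lt (Nat.lt_succ_of_le h), Nat.sub_eq_zero_of_le h, pow_zero, sub_self,
      mul_zero, zero_mul]

lemma qBinom_succ_succ (hq : ∀ n, qPoch q q n ≠ 0) (n k : ℕ) :
    qBinom q (n + 1) (k + 1) = q ^ (k + 1) * qBinom q n (k + 1) + qBinom q n k := by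
  rcases lt_trichotomy n k with h | rfl | h
  · simp only [qBinom_eq_zero_of_lt, h, h.trans k.lt_succ_self, Nat.succ_lt_succ h, mul_zero,
      add_zero]
  · rw [qBinom_self hq, qBinom_self hq, qBinom_eq_zero_of_lt n.lt_succ_self, mul_zero, zero_add]
  · obtain ⟨d, rfl⟩ := Nat.exists_eq_add_of_lt h
    have := hq k
    have := hq d
    have := one_sub_pow_succ_ne_zero hq k
    have := one_sub_pow_succ_ne_zero hq d
    rw [qBinom_of_le (by omega), qBinom_of_le h, qBinom_of_le h.le,
      show k + d + 1 + 1 - (k + 1) = d + 1 by omega, show k + d + 1 - (k + 1) = d by omega,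
      show k + d + 1 - k = d + 1 by omega, qPoch_succ q q (k + d + 1), qPoch_succ q q k,
      qPoch_succ q q d, ← pow_succ', ← pow_succ', ← pow_succ']
    field_simp
    ring

lemma qBinom_succ_succ' (hq : ∀ n, qPoch q q n ≠ 0) (n k : ℕ) :
    qBinom q (n + 1) (k + 1) = qBinom q n (k + 1) + q ^ (n - k) * qBinom q n k := by
  linear_combination qBinom_succ_succ hq n k - one_sub_pow_succ_mul_qBinom_succ hq n k

lemma qBinom_mul_qBinom (hq : ∀ n, qPoch q q n ≠ 0) {n k r : ℕ} (hkn : k ≤ n) (hrk : r ≤ k) :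
    qBinom q n k * qBinom q k r = qBinom q n r * qBinom q (n - r) (k - r) := by
  rw [qBinom_of_le hkn, qBinom_of_le hrk, qBinom_of_le (hrk.trans hkn),
    qBinom_of_le (Nat.sub_le_sub_right hkn r), Nat.sub_sub_sub_cancel_right hrk]
  have := hq k
  have := hq (n - r)
  field_simp

lemma pow_mul_pow_sub_mul_qBinom (q : ℂ) (n k : ℕ) :
    q ^ k * (q ^ (n - k) * qBinom q n k) = q ^ n * qBinom q n k := by
  rcases le_or_gt k n with h | h
  · rw [← mul_assoc, pow_mul_pow_sub q h]
  · rw [qBinom_eq_zero_of_lt h, mul_zero, mul_zero, mul_zero]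

lemma exists_norm_qBinom_le (hq : ‖q‖ < 1) : ∃ C, ∀ n k, ‖qBinom q n k‖ ≤ C := by
  have hq₀ := qPoch_ne_zero hq.le hq
  obtain ⟨A, hA⟩ := exists_norm_qPoch_le hq hq₀
  obtain ⟨B, hB⟩ := exists_norm_inv_qPoch_le hq hq₀
  have hA₀ : 0 ≤ A := (norm_nonneg _).trans (hA 0)
  have hB₀ : 0 ≤ B := (norm_nonneg _).trans (hB 0)
  refine ⟨A * (B * B), fun n k => ?_⟩
  rcases le_or_gt k n with h | h
  · rw [qBinom_of_le h, div_eq_mul_inv, mul_inv, norm_mul, norm_mul]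
    gcongr
    exacts [hA n, hB k, hB (n - k)]
  · rw [qBinom_eq_zero_of_lt h, norm_zero]
    positivity

end GaussianBinomial

/-- The factor `b ^ r q ^ (r (r - 1))` by which one step along the Bailey chain relative to `b / q`
multiplies the `r`-th term of the first member of a Bailey pair. -/
noncomputable def baileyFactor (q b : ℂ) (r : ℕ) : ℂ := b ^ r * q ^ (r ^ 2 - r)

section BaileyFactor

lemma baileyFactor_zero (q b : ℂ) : baileyFactor q b 0 = 1 := by simp [baileyFactor]

lemma baileyFactor_add (q b : ℂ) (r s : ℕ) :
    baileyFactor q b (r + s) = baileyFactor q b r * baileyFactor q (b * q ^ (2 * r)) s := by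
  have hexp : (r + s) ^ 2 - (r + s) = (r ^ 2 - r) + 2 * r * s + (s ^ 2 - s) := by
    have hr : r ≤ r ^ 2 := Nat.le_self_pow two_ne_zero r
    have hs : s ≤ s ^ 2 := Nat.le_self_pow two_ne_zero s
    rw [add_sq]
    omega
  simp only [baileyFactor, hexp, pow_add, mul_pow, ← pow_mul]
  ring

lemma baileyFactor_succ (q b : ℂ) (r : ℕ) :
    baileyFactor q b (r + 1) = b * baileyFactor q (b * q ^ 2) r := by
  rw [add_comm, baileyFactor_add, mul_one]
  simp [baileyFactor]

lemma baileyFactor_mul (q b c : ℂ) (r : ℕ) :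
    baileyFactor q (b * c) r = c ^ r * baileyFactor q b r := by
  simp only [baileyFactor, mul_pow]
  ring

lemma norm_baileyFactor_le {q b : ℂ} (hq : ‖q‖ ≤ 1) (r : ℕ) :
    ‖baileyFactor q b r‖ ≤ ‖b‖ ^ r := by
  rw [baileyFactor, norm_mul, norm_pow, norm_pow]
  exact mul_le_of_le_one_right (by positivity) (pow_le_one₀ (norm_nonneg q) hq)

end BaileyFactor

section BaileyLemma

variable {q b : ℂ}

lemma sum_baileyFactor_mul_qBinom_mul_qPoch (hq : ∀ n, qPoch q q n ≠ 0) (b : ℂ) (n : ℕ) :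
    ∑ k ∈ Finset.range (n + 1), baileyFactor q b k * qBinom q n k * qPoch q (b * q ^ k) (n - k)
      = 1 := by
  induction n generalizing b with
  | zero => simp [baileyFactor_zero, qBinom_self hq, qPoch_zero]
  | succ n ih =>
    have hleft : ∑ k ∈ Finset.range (n + 2),
        baileyFactor q b k * qBinom q n k * qPoch q (b * q ^ k) (n + 1 - k) = 1 - b * q ^ n := by
      have ih_mul := congrArg (· * (1 - b * q ^ n)) (ih b)
      simp only [one_mul, Finset.sum_mul] at ih_mul
      rw [Finset.sum_range_succ, qBinom_eq_zero_of_lt n.lt_succ_self, mul_zero, zero_mul, add_zero,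
        ← ih_mul]
      refine Finset.sum_congr rfl fun k hk => ?_
      have hk : k ≤ n := Finset.mem_range_succ_iff.1 hk
      rw [Nat.sub_add_comm hk, qPoch_succ, mul_assoc b, pow_mul_pow_sub q hk]
      ring
    have hright : ∑ k ∈ Finset.range (n + 1), baileyFactor q b (k + 1) *
        (q ^ (n - k) * qBinom q n k) * qPoch q (b * q ^ (k + 1)) (n - k) = b * q ^ n := by
      rw [← mul_one (b * q ^ n), ← ih (b * q), Finset.mul_sum]
      refine Finset.sum_congr rfl fun k _ => ?_
      rw [baileyFactor_succ, sq, ← mul_assoc b q q, baileyFactor_mul, pow_succ', ← mul_assoc b q]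
      linear_combination b * baileyFactor q (b * q) k * qPoch q (b * q * q ^ k) (n - k) *
        pow_mul_pow_sub_mul_qBinom q n k
    rw [← sub_add_cancel (1 : ℂ) (b * q ^ n), ← hleft, ← hright, Finset.sum_range_succ' _ (n + 1),
      Finset.sum_range_succ' _ (n + 1), add_right_comm, ← Finset.sum_add_distrib]
    simp only [qBinom_zero_right hq, qBinom_succ_succ' hq, Nat.add_sub_add_right]
    congr 1
    exact Finset.sum_congr rfl fun k _ => by ring

/-- The `q`-Chu–Vandermonde summation, in the terminating case that drives the Bailey lemma. -/
lemma sum_baileyFactor_mul_qBinom_div_qPoch (hq : ∀ n, qPoch q q n ≠ 0)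
    (hb : ∀ n, qPoch q b n ≠ 0) (n : ℕ) :
    ∑ k ∈ Finset.range (n + 1), baileyFactor q b k * qBinom q n k / qPoch q b k
      = 1 / qPoch q b n := by
  rw [← sum_baileyFactor_mul_qBinom_mul_qPoch hq b n, Finset.sum_div]
  refine Finset.sum_congr rfl fun k hk => ?_
  obtain ⟨d, rfl⟩ := Nat.exists_eq_add_of_le (Finset.mem_range_succ_iff.1 hk)
  have := qPoch_mul_pow_ne_zero hb k d
  rw [qPoch_add, Nat.add_sub_cancel_left, mul_div_mul_right _ _ this]

/-- The second member `β` of the Bailey pair relative to `b / q` with first member `α`. Compared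
with the usual normalisation, `α r` and `β n` carry the extra factors `(q;q)_r` and `(q;q)_n`. -/
noncomputable def baileySum (q b : ℂ) (α : ℕ → ℂ) (n : ℕ) : ℂ :=
  ∑ r ∈ Finset.range (n + 1), qBinom q n r * α r / qPoch q b (n + r)

lemma sum_Ico_baileyFactor_mul_qBinom_mul_qBinom_div (hq : ∀ n, qPoch q q n ≠ 0)
    (hb : ∀ n, qPoch q b n ≠ 0) {n r : ℕ} (hr : r ≤ n) :
    ∑ k ∈ Finset.Ico r (n + 1),
        baileyFactor q b k * (qBinom q n k * qBinom q k r) / qPoch q b (k + r)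
      = qBinom q n r * baileyFactor q b r / qPoch q b (n + r) := by
  obtain ⟨d, rfl⟩ := Nat.exists_eq_add_of_le hr
  have hvand := sum_baileyFactor_mul_qBinom_div_qPoch hq (qPoch_mul_pow_ne_zero hb (2 * r)) d
  calc _ = ∑ j ∈ Finset.range (d + 1), qBinom q (r + d) r * baileyFactor q b r /
          qPoch q b (2 * r) * (baileyFactor q (b * q ^ (2 * r)) j * qBinom q d j /
            qPoch q (b * q ^ (2 * r)) j) := by
        rw [Finset.sum_Ico_eq_sum_range, show r + d + 1 - r = d + 1 by omega]
        refine Finset.sum_congr rfl fun j hj => ?_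
        have hj : j ≤ d := Finset.mem_range_succ_iff.1 hj
        rw [qBinom_mul_qBinom hq (Nat.add_le_add_left hj r) (Nat.le_add_right r j),
          Nat.add_sub_cancel_left, Nat.add_sub_cancel_left, baileyFactor_add,
          show r + j + r = 2 * r + j by omega, qPoch_add]
        ring
    _ = _ := by
        rw [← Finset.mul_sum, hvand, show r + d + r = 2 * r + d by omega, qPoch_add]
        ring

theorem sum_baileyFactor_mul_qBinom_mul_baileySum (hq : ∀ n, qPoch q q n ≠ 0)
    (hb : ∀ n, qPoch q b n ≠ 0) (α : ℕ → ℂ) (n : ℕ) :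
    ∑ k ∈ Finset.range (n + 1), baileyFactor q b k * qBinom q n k * baileySum q b α k
      = baileySum q b (fun r => baileyFactor q b r * α r) n := by
  calc _ = ∑ r ∈ Finset.range (n + 1), ∑ k ∈ Finset.Ico r (n + 1),
          α r * (baileyFactor q b k * (qBinom q n k * qBinom q k r) / qPoch q b (k + r)) := by
        simp only [baileySum, Finset.mul_sum]
        rw [Finset.sum_comm' (s' := fun r => Finset.Ico r (n + 1))
          (t' := Finset.range (n + 1)) fun k r => by
            simp only [Finset.mem_range, Finset.mem_Ico]; omega]
        exact Finset.sum_congr rfl fun r _ => Finset.sum_congr rfl fun k _ => by ring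
    _ = _ := by
        refine Finset.sum_congr rfl fun r hr => ?_
        rw [← Finset.mul_sum, sum_Ico_baileyFactor_mul_qBinom_mul_qBinom_div hq hb
          (Finset.mem_range_succ_iff.1 hr)]
        ring

end BaileyLemma

/-- The first member, built from a sequence `e`, of a Bailey pair relative to `b / q`: its `r`-th
term is `e r (b;q)_r (1 - b q ^ (2 r - 1)) / (1 - b q ^ (r - 1))`, with the fraction cancelled so
that nothing is singular and read as `1` at `r = 0`. -/
noncomputable def wellPoised (q b : ℂ) (e : ℕ → ℂ) : ℕ → ℂ
  | 0 => e 0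
  | r + 1 => e (r + 1) * qPoch q b r * (1 - b * q ^ (2 * r + 1))

/-- The sequence `(-1) ^ r q ^ (r (r - 1) / 2)` of the unit Bailey pair, moved `M` steps along the
Bailey chain relative to `b / q`, without the factors that `wellPoised` supplies. -/
noncomputable def unitChain (q b : ℂ) (M r : ℕ) : ℂ :=
  (-1) ^ r * q ^ r.choose 2 * baileyFactor q b r ^ M

section WellPoised

variable {q b : ℂ}

lemma one_sub_mul_pow_mul_qBinom_succ_succ (hq : ∀ n, qPoch q q n ≠ 0) (b : ℂ) (n r : ℕ) :
    (1 - b * q ^ (2 * r + 1)) * qBinom q (n + 1) (r + 1)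
      = q ^ (r + 1) * (1 - b * q ^ r) * qBinom q n (r + 1)
        + (1 - b * q ^ (n + r + 1)) * qBinom q n r := by
  linear_combination qBinom_succ_succ hq n r - b * q ^ (2 * r + 1) * qBinom_succ_succ' hq n r
    - b * q ^ (r + 1) * pow_mul_pow_sub_mul_qBinom q n r

lemma baileySum_wellPoised_zero (hq : ∀ n, qPoch q q n ≠ 0) (e : ℕ → ℂ) :
    baileySum q b (wellPoised q b e) 0 = e 0 := by
  simp [baileySum, wellPoised, qBinom_zero_right hq, qPoch_zero]

lemma baileySum_wellPoised_succ (hq : ∀ n, qPoch q q n ≠ 0) (hb : ∀ n, qPoch q b n ≠ 0)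
    (e : ℕ → ℂ) (n : ℕ) :
    baileySum q b (wellPoised q b e) (n + 1)
      = baileySum q (b * q) (fun r => (e r * q ^ r + e (r + 1)) * qPoch q b r / (1 - b)) n := by
  set t : ℕ → ℂ := fun r => qBinom q n r * (e r * q ^ r * qPoch q b r) / qPoch q b (n + 1 + r)
    with ht
  have hsplit (r : ℕ) :
      qBinom q (n + 1) (r + 1) * wellPoised q b e (r + 1) / qPoch q b (n + 1 + (r + 1))
        = t (r + 1) + qBinom q n r * (e (r + 1) * qPoch q b r) / qPoch q b (n + 1 + r) := by
    have := hb (n + r + 1)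
    have := one_sub_mul_pow_ne_zero hb (n + r + 1)
    simp only [ht, wellPoised]
    rw [show n + 1 + (r + 1) = n + r + 1 + 1 by omega, show n + 1 + r = n + r + 1 by omega,
      qPoch_succ q b (n + r + 1), qPoch_succ q b r]
    field_simp
    linear_combination e (r + 1) * qPoch q b r * one_sub_mul_pow_mul_qBinom_succ_succ hq b n r
  have hlast : t (n + 1) = 0 := by
    simp only [ht, qBinom_eq_zero_of_lt n.lt_succ_self, zero_mul, zero_div]
  have hfirst : qBinom q (n + 1) 0 * wellPoised q b e 0 / qPoch q b (n + 1 + 0) = t 0 := by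
    simp [ht, wellPoised, qBinom_zero_right hq, qPoch_zero]
  simp only [baileySum]
  rw [Finset.sum_range_succ', hfirst, Finset.sum_congr rfl fun r _ => hsplit r,
    Finset.sum_add_distrib, add_right_comm, ← Finset.sum_range_succ' t, Finset.sum_range_succ,
    hlast, add_zero, ← Finset.sum_add_distrib]
  refine Finset.sum_congr rfl fun r _ => ?_
  simp only [ht]
  rw [add_right_comm n 1 r, qPoch_succ', ← add_div, div_mul_eq_div_div_swap]
  ring

lemma unitChain_zero_right (q b : ℂ) (M : ℕ) : unitChain q b M 0 = 1 := by
  simp [unitChain, baileyFactor_zero]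

lemma choose_succ_two (r : ℕ) : (r + 1).choose 2 = r.choose 2 + r := by
  rw [Nat.choose_succ_succ', Nat.choose_one_right, add_comm]

lemma baileySum_unitChain_zero (hq : ∀ n, qPoch q q n ≠ 0) (hb : ∀ n, qPoch q b n ≠ 0) :
    baileySum q b (wellPoised q b (unitChain q b 0)) = Pi.single 0 1 := by
  funext n
  rcases n with _ | n
  · rw [baileySum_wellPoised_zero hq, unitChain_zero_right, Pi.single_eq_same]
  · have hcancel (r : ℕ) : unitChain q b 0 r * q ^ r + unitChain q b 0 (r + 1) = 0 := by
      simp only [unitChain, choose_succ_two]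
      ring
    rw [baileySum_wellPoised_succ hq hb, Pi.single_eq_of_ne n.succ_ne_zero]
    simp [hcancel, baileySum]

lemma baileyFactor_mul_wellPoised_unitChain (q b : ℂ) (M r : ℕ) :
    baileyFactor q b r * wellPoised q b (unitChain q b M) r
      = wellPoised q b (unitChain q b (M + 1)) r := by
  rcases r with _ | r
  · simp only [wellPoised, unitChain_zero_right, baileyFactor_zero, mul_one]
  · simp only [wellPoised, unitChain]
    ring

lemma unitChain_mul_pow_add_succ (q b : ℂ) (M r : ℕ) :
    unitChain q b M r * q ^ r + unitChain q b M (r + 1)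
      = (-1) ^ r * q ^ (r + 1).choose 2 * baileyFactor q b r ^ M * (1 - (b * q ^ (2 * r)) ^ M) := by
  have hfactor : baileyFactor q b (r + 1) = baileyFactor q b r * (b * q ^ (2 * r)) := by
    rw [baileyFactor_add]
    simp [baileyFactor]
  simp only [unitChain, choose_succ_two, hfactor, mul_pow, pow_add]
  ring

end WellPoised

section GaussSum

variable {q x : ℂ}

lemma norm_sq_lt_one (hx : ‖x‖ < 1) : ‖x ^ 2‖ < 1 := by
  rw [norm_pow]
  exact pow_lt_one₀ (norm_nonneg x) hx two_ne_zero

/-- The summand, as a function of `n`, of the Gauss sum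
`₂φ₁(x q ^ r, q ^ (r + 1); x² q ^ (2 r + 1); q, x)` up to a constant factor, reindexed so that its
support is `n ≥ r`. -/
noncomputable def gaussTerm (q x : ℂ) (r n : ℕ) : ℂ :=
  qPoch q x n * x ^ n * qBinom q n r / qPoch q (x ^ 2 * q) (n + r)

lemma qPoch_sq_mul_ne_zero (hq : ‖q‖ ≤ 1) (hx : ‖x‖ < 1) (n : ℕ) :
    qPoch q (x ^ 2 * q) n ≠ 0 :=
  qPoch_mul_ne_zero (qPoch_ne_zero hq (norm_sq_lt_one hx)) n

lemma exists_norm_gaussTerm_le (hq : ‖q‖ < 1) (hx : ‖x‖ < 1) :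
    ∃ C, ∀ r n, ‖gaussTerm q x r n‖ ≤ C * ‖x‖ ^ n := by
  obtain ⟨A, hA⟩ := exists_norm_qPoch_le hq (qPoch_ne_zero hq.le hx)
  obtain ⟨B, hB⟩ := exists_norm_qBinom_le hq
  obtain ⟨D, hD⟩ := exists_norm_inv_qPoch_le hq (qPoch_sq_mul_ne_zero hq.le hx)
  have hA₀ : 0 ≤ A := (norm_nonneg _).trans (hA 0)
  have hB₀ : 0 ≤ B := (norm_nonneg _).trans (hB 0 0)
  refine ⟨A * B * D, fun r n => ?_⟩
  calc ‖gaussTerm q x r n‖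
      = ‖qPoch q x n‖ * ‖x‖ ^ n * ‖qBinom q n r‖ * ‖(qPoch q (x ^ 2 * q) (n + r))⁻¹‖ := by
        rw [gaussTerm, div_eq_mul_inv, norm_mul, norm_mul, norm_mul, norm_pow]
    _ ≤ A * ‖x‖ ^ n * B * D := by
        gcongr
        exacts [hA n, hB n r, hD (n + r)]
    _ = A * B * D * ‖x‖ ^ n := by ring

lemma summable_gaussTerm (hq : ‖q‖ < 1) (hx : ‖x‖ < 1) (r : ℕ) : Summable (gaussTerm q x r) := by
  obtain ⟨C, hC⟩ := exists_norm_gaussTerm_le hq hx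
  exact .of_norm_bounded ((summable_geometric_of_lt_one (norm_nonneg x) hx).mul_left C) (hC r)

lemma hasSum_sub_succ {G : Type*} [AddCommGroup G] [TopologicalSpace G] [IsTopologicalAddGroup G]
    {f : ℕ → G} (hf : Summable f) : HasSum (fun n => f n - f (n + 1)) (f 0) := by
  simpa using hf.hasSum.sub ((hasSum_nat_add_iff' 1).2 hf.hasSum)

lemma summable_one_sub_mul_pow_mul_gaussTerm (hq : ‖q‖ < 1) (hx : ‖x‖ < 1) (c : ℂ) (r : ℕ) :
    Summable fun n => (1 - c * q ^ n) * gaussTerm q x r n := by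
  have hle (n : ℕ) : ‖(1 - c * q ^ n) * gaussTerm q x r n‖ ≤ (1 + ‖c‖) * ‖gaussTerm q x r n‖ := by
    rw [norm_mul]
    gcongr
    calc ‖1 - c * q ^ n‖ ≤ ‖(1 : ℂ)‖ + ‖c * q ^ n‖ := norm_sub_le _ _
      _ ≤ 1 + ‖c‖ := by
        rw [norm_one, norm_mul, norm_pow]
        gcongr
        exact mul_le_of_le_one_right (norm_nonneg c) (pow_le_one₀ (norm_nonneg q) hq.le)
  exact .of_norm_bounded ((summable_gaussTerm hq hx r).norm.mul_left _) hle

lemma hasSum_gaussTerm_zero (hq : ‖q‖ < 1) (hx : ‖x‖ < 1) :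
    HasSum (gaussTerm q x 0) ((1 - x ^ 2) / (1 - x)) := by
  have hq₀ := qPoch_ne_zero hq.le hq
  have hb := qPoch_sq_mul_ne_zero hq.le hx
  have hx₁ : 1 - x ≠ 0 := by simpa using one_sub_mul_pow_ne_zero (qPoch_ne_zero hq.le hx) 0
  have htele := (hasSum_sub_succ
    (summable_one_sub_mul_pow_mul_gaussTerm hq hx (x ^ 2) 0)).div_const (1 - x)
  have hterm (n : ℕ) : gaussTerm q x 0 n = ((1 - x ^ 2 * q ^ n) * gaussTerm q x 0 n
      - (1 - x ^ 2 * q ^ (n + 1)) * gaussTerm q x 0 (n + 1)) / (1 - x) := by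
    have hbn := one_sub_mul_pow_ne_zero hb n
    have := hb n
    simp only [gaussTerm, add_zero, qBinom_zero_right hq₀, mul_one]
    rw [mul_assoc, ← pow_succ'] at hbn
    rw [qPoch_succ q x, qPoch_succ q (x ^ 2 * q), mul_assoc (x ^ 2), ← pow_succ']
    field_simp
    ring
  simp only [← hterm] at htele
  have hzero : gaussTerm q x 0 0 = 1 := by simp [gaussTerm, qPoch_zero, qBinom_zero_right hq₀]
  simpa only [pow_zero, mul_one, hzero] using htele

lemma one_sub_mul_gaussTerm_succ (hq : ∀ n, qPoch q q n ≠ 0)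
    (hb : ∀ n, qPoch q (x ^ 2 * q) n ≠ 0) (r n : ℕ) :
    (1 - x ^ 2 * q ^ r) * (1 - x * q ^ (r + 1)) * gaussTerm q x (r + 1) n
      = x * (1 - x * q ^ r) * gaussTerm q x r n
        + (1 - x ^ 2 * q ^ (2 * r + 1)) *
          ((1 - x ^ 2 * q ^ (r + 1) * q ^ n) * gaussTerm q x (r + 1) n
            - (1 - x ^ 2 * q ^ (r + 1) * q ^ (n + 1)) * gaussTerm q x (r + 1) (n + 1)) := by
  have habsorb :
      (q ^ r - q ^ n) * qBinom q n r = q ^ r * (1 - q ^ (r + 1)) * qBinom q n (r + 1) := by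
    linear_combination pow_mul_pow_sub_mul_qBinom q n r
      - q ^ r * one_sub_pow_succ_mul_qBinom_succ hq n r
  have := hb (n + r)
  have := one_sub_mul_pow_ne_zero hb (n + r)
  have := one_sub_mul_pow_ne_zero hb (n + r + 1)
  simp only [gaussTerm]
  rw [show n + (r + 1) = n + r + 1 by omega, show n + 1 + (r + 1) = n + r + 1 + 1 by omega,
    qPoch_succ q _ (n + r + 1), qPoch_succ q _ (n + r), qPoch_succ q x n,
    qBinom_succ_succ hq n r]
  field_simp
  linear_combination
    qPoch q x n * x ^ (n + 2) * (1 - x * q ^ (r + 1)) * (1 - x ^ 2 * q * q ^ (n + r + 1)) * habsorb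

/-- The contiguous relation of `one_sub_mul_gaussTerm_succ` telescopes when summed over `n`, and
this evaluates the sum by induction on `r`. -/
theorem hasSum_gaussTerm (hq : ‖q‖ < 1) (hx : ‖x‖ < 1) (r : ℕ) :
    HasSum (gaussTerm q x r) ((1 - x ^ 2) * x ^ r / ((1 - x * q ^ r) * qPoch q (x ^ 2) r)) := by
  have hq₀ := qPoch_ne_zero hq.le hq
  have hx₀ := one_sub_mul_pow_ne_zero (qPoch_ne_zero hq.le hx)
  have hx₂ := one_sub_mul_pow_ne_zero (qPoch_ne_zero hq.le (norm_sq_lt_one hx))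
  induction r with
  | zero => simpa [qPoch_zero] using hasSum_gaussTerm_zero hq hx
  | succ r ih =>
    have hrel := hasSum_sub_succ
      (summable_one_sub_mul_pow_mul_gaussTerm hq hx (x ^ 2 * q ^ (r + 1)) (r + 1))
    have hsum := (ih.mul_left (x * (1 - x * q ^ r))).add
      (hrel.mul_left (1 - x ^ 2 * q ^ (2 * r + 1)))
    have hzero : gaussTerm q x (r + 1) 0 = 0 := by
      simp [gaussTerm, qBinom_eq_zero_of_lt r.succ_pos]
    rw [hzero, mul_zero, mul_zero, add_zero] at hsum
    simp only [← one_sub_mul_gaussTerm_succ hq₀ (qPoch_sq_mul_ne_zero hq.le hx) r] at hsum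
    have := hx₀ r
    have hc : (1 - x ^ 2 * q ^ r) * (1 - x * q ^ (r + 1)) ≠ 0 := mul_ne_zero (hx₂ r) (hx₀ (r + 1))
    have hvalue : (1 - x ^ 2 * q ^ r) * (1 - x * q ^ (r + 1)) *
          ((1 - x ^ 2) * x ^ (r + 1) / ((1 - x * q ^ (r + 1)) * qPoch q (x ^ 2) (r + 1)))
        = x * (1 - x * q ^ r) *
          ((1 - x ^ 2) * x ^ r / ((1 - x * q ^ r) * qPoch q (x ^ 2) r)) := by
      have := hx₀ (r + 1)
      have := hx₂ r
      rw [qPoch_succ q (x ^ 2) r]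
      field_simp
      ring
    rwa [← hasSum_mul_left_iff hc, hvalue]

theorem hasSum_mul_gaussSum (hq : ‖q‖ < 1) (hx : ‖x‖ < 1) {α : ℕ → ℂ} (hα : Summable α) :
    HasSum (fun r => α r * ((1 - x ^ 2) * x ^ r / ((1 - x * q ^ r) * qPoch q (x ^ 2) r)))
      (∑' n, qPoch q x n * x ^ n * baileySum q (x ^ 2 * q) α n) := by
  obtain ⟨C, hC⟩ := exists_norm_gaussTerm_le hq hx
  have hgeom := (summable_geometric_of_lt_one (norm_nonneg x) hx).mul_left C
  have hpair : Summable (Function.uncurry fun r n => α r * gaussTerm q x r n) := by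
    refine .of_norm_bounded (g := fun p : ℕ × ℕ => ‖α p.1‖ * (C * ‖x‖ ^ p.2))
      (hα.norm.mul_of_nonneg hgeom (fun r => norm_nonneg (α r))
        fun n => (norm_nonneg _).trans (hC 0 n)) fun p => ?_
    rw [Function.uncurry_apply_pair, norm_mul]
    exact mul_le_mul_of_nonneg_left (hC p.1 p.2) (norm_nonneg (α p.1))
  have hcolumn (n : ℕ) : ∑' r, α r * gaussTerm q x r n
      = qPoch q x n * x ^ n * baileySum q (x ^ 2 * q) α n := by
    rw [tsum_eq_sum (s := Finset.range (n + 1)) fun r hr => by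
      rw [gaussTerm, qBinom_eq_zero_of_lt (by simpa using hr), mul_zero, zero_div, mul_zero],
      baileySum, Finset.mul_sum]
    exact Finset.sum_congr rfl fun r _ => by rw [gaussTerm]; ring
  rw [← tsum_congr hcolumn, hpair.tsum_comm, ← hpair.tsum_prod_uncurry hpair.prod_factor]
  exact hpair.hasSum.prod_fiberwise fun r => (hasSum_gaussTerm hq hx r).mul_left (α r)

end GaussSum

section IteratedKernelSum

lemma Kfun_zero {m : ℕ} (k : Fin m → ℕ) : Kfun m k 0 = 0 := dif_neg (by omega)

lemma Kfun_snoc_last {m : ℕ} (k : Fin m → ℕ) (n : ℕ) :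
    Kfun (m + 1) (Fin.snoc k n) (m + 1) = n := by
  simp [Kfun, Fin.snoc]

lemma Kfun_snoc_of_le {m : ℕ} (k : Fin m → ℕ) (n : ℕ) {i : ℕ} (hi : i ≤ m) :
    Kfun (m + 1) (Fin.snoc k n) i = Kfun m k i := by
  rcases i with _ | i
  · rw [Kfun_zero, Kfun_zero]
  · have hi' : i < m := hi
    simp [Kfun, Fin.snoc, hi', hi'.le]

variable {𝕜 : Type*} [NormedField 𝕜]

/-- The summand `d k_m ∏_{i < m} c_i(k_{i+1}, k_i)` of a nested sum with kernels `c i`. -/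
def kernelTerm (c : ℕ → ℕ → ℕ → 𝕜) (d : ℕ → 𝕜) (m : ℕ) (k : Fin m → ℕ) : 𝕜 :=
  d (Kfun m k m) * ∏ i ∈ Finset.range m, c i (Kfun m k (i + 1)) (Kfun m k i)

/-- The sequence obtained from the unit sequence at `0` by applying in turn the operators with
kernels `c 0, …, c (m - 1)`. -/
noncomputable def iteratedKernelSum (c : ℕ → ℕ → ℕ → 𝕜) : ℕ → ℕ → 𝕜
  | 0 => Pi.single 0 1
  | m + 1 => fun n => ∑' k, c m n k * iteratedKernelSum c m k

lemma kernelTerm_snoc (c : ℕ → ℕ → ℕ → 𝕜) (d : ℕ → 𝕜) {m : ℕ} (k : Fin m → ℕ) (n : ℕ) :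
    kernelTerm c d (m + 1) (Fin.snoc k n) = d n * kernelTerm c (c m n) m k := by
  have hprod : ∏ i ∈ Finset.range m, c i (Kfun (m + 1) (Fin.snoc k n) (i + 1))
      (Kfun (m + 1) (Fin.snoc k n) i) = ∏ i ∈ Finset.range m, c i (Kfun m k (i + 1)) (Kfun m k i) :=
    Finset.prod_congr rfl fun i hi => by
      have hi := Finset.mem_range.1 hi
      rw [Kfun_snoc_of_le k n hi, Kfun_snoc_of_le k n hi.le]
  rw [kernelTerm, kernelTerm, Finset.prod_range_succ, hprod, Kfun_snoc_last,
    Kfun_snoc_of_le k n le_rfl, mul_comm (Finset.prod _ _)]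

variable {c : ℕ → ℕ → ℕ → 𝕜} {g : ℕ → 𝕜}

lemma summable_norm_mul_kernelTerm (hc : ∀ i n k, ‖c i n k‖ ≤ ‖g k‖) {d : ℕ → 𝕜}
    (hd : Summable fun n => ‖d n‖) {m : ℕ} (hm : Summable fun k => ‖kernelTerm c g m k‖) :
    Summable fun p : ℕ × (Fin m → ℕ) => ‖d p.1 * kernelTerm c (c m p.1) m p.2‖ := by
  refine .of_nonneg_of_le (fun _ => norm_nonneg _) (fun p => ?_)
    (hd.mul_of_nonneg hm (fun _ => norm_nonneg _) fun _ => norm_nonneg _)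
  rw [norm_mul, kernelTerm, kernelTerm, norm_mul, norm_mul]
  gcongr
  exact hc m p.1 _

lemma summable_norm_kernelTerm (hc : ∀ i n k, ‖c i n k‖ ≤ ‖g k‖) (hg : Summable fun k => ‖g k‖)
    {d : ℕ → 𝕜} (hd : Summable fun n => ‖d n‖) (m : ℕ) :
    Summable fun k => ‖kernelTerm c d m k‖ := by
  induction m generalizing d with
  | zero => exact .of_finite
  | succ m ih =>
    refine (Fin.snocEquiv fun _ => ℕ).summable_iff.1
      ((summable_norm_mul_kernelTerm hc hd (ih hg)).congr fun p => ?_)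
    exact congrArg norm (kernelTerm_snoc c d p.2 p.1).symm

theorem tsum_kernelTerm [CompleteSpace 𝕜] (hc : ∀ i n k, ‖c i n k‖ ≤ ‖g k‖)
    (hg : Summable fun k => ‖g k‖) {d : ℕ → 𝕜} (hd : Summable fun n => ‖d n‖) (m : ℕ) :
    ∑' k, kernelTerm c d m k = ∑' n, d n * iteratedKernelSum c m n := by
  induction m generalizing d with
  | zero =>
    rw [tsum_fintype, Fintype.sum_unique, tsum_eq_single 0 fun n hn => by
      rw [iteratedKernelSum, Pi.single_eq_of_ne hn, mul_zero]]
    simp [kernelTerm, iteratedKernelSum, Kfun_zero]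
  | succ m ih =>
    have hpair := (summable_norm_mul_kernelTerm hc hd (summable_norm_kernelTerm hc hg hg m)).of_norm
    have hrow (n : ℕ) : Summable fun k => ‖c m n k‖ :=
      .of_nonneg_of_le (fun _ => norm_nonneg _) (hc m n) hg
    calc ∑' k, kernelTerm c d (m + 1) k
        = ∑' p : ℕ × (Fin m → ℕ), kernelTerm c d (m + 1) (Fin.snoc p.2 p.1) :=
          ((Fin.snocEquiv fun _ => ℕ).tsum_eq _).symm
      _ = ∑' n, ∑' k, d n * kernelTerm c (c m n) m k := by
          simp only [kernelTerm_snoc]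
          exact hpair.tsum_prod
      _ = ∑' n, d n * iteratedKernelSum c (m + 1) n :=
          tsum_congr fun n => by rw [tsum_mul_left, ih (hrow n), iteratedKernelSum]

end IteratedKernelSum

section ChainWeight

variable {q b : ℂ}

/-- The kernel, in `n = k_{i+1}` and `k = k_i`, of the `i`-th step of the chain: up to step `a` the
Bailey parameter is `b`, from then on it is `b * q`, and step `a` makes the change by raising `n`
to `n + 1`. -/
noncomputable def chainWeight (q b : ℂ) (a i n k : ℕ) : ℂ :=
  baileyFactor q (if i ≤ a then b else b * q) k * qBinom q (if i = a then n + 1 else n) k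

lemma exists_norm_chainWeight_le (hq : ‖q‖ < 1) (a : ℕ) :
    ∃ C : ℂ, ∀ i n k, ‖chainWeight q b a i n k‖ ≤ ‖C * b ^ k‖ := by
  obtain ⟨C, hC⟩ := exists_norm_qBinom_le hq
  refine ⟨C, fun i n k => ?_⟩
  have hparam : ‖if i ≤ a then b else b * q‖ ≤ ‖b‖ := by
    split_ifs
    · exact le_rfl
    · rw [norm_mul]
      exact mul_le_of_le_one_right (norm_nonneg b) hq.le
  rw [chainWeight, mul_comm, norm_mul, norm_mul, norm_pow, Complex.norm_real]
  gcongr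
  · exact (hC _ k).trans (le_abs_self C)
  · exact (norm_baileyFactor_le hq.le k).trans (pow_le_pow_left₀ (norm_nonneg _) hparam k)

lemma Wterm_eq_kernelTerm (hq : ∀ n, qPoch q q n ≠ 0) (x : ℂ) {m a : ℕ} (ha : a < m)
    (k : Fin m → ℕ) :
    Wterm q x m a k
      = kernelTerm (chainWeight q (x ^ 2) a) (fun n => qPoch q x n * x ^ n) m k := by
  set w : ℕ → ℂ := fun i => chainWeight q (x ^ 2) a i (Kfun m k (i + 1)) (Kfun m k i) with hw
  have hbelow : ∏ i ∈ Finset.Ico 1 a, q ^ (Kfun m k i ^ 2 - Kfun m k i) * x ^ (2 * Kfun m k i) *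
      qBinom q (Kfun m k (i + 1)) (Kfun m k i) = ∏ i ∈ Finset.range a, w i := by
    rw [← Finset.prod_subset (s₁ := Finset.Ico 1 a) (s₂ := Finset.range a)
      (fun i hi => Finset.mem_range.2 (Finset.mem_Ico.1 hi).2) fun i hi hi' => by
        obtain rfl : i = 0 := by
          simp only [Finset.mem_range, Finset.mem_Ico] at hi hi'
          omega
        simp [hw, chainWeight, Kfun_zero, baileyFactor_zero, qBinom_zero_right hq]]
    refine Finset.prod_congr rfl fun i hi => ?_
    have hia := (Finset.mem_Ico.1 hi).2
    simp only [hw]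
    rw [chainWeight, if_pos hia.le, if_neg hia.ne, baileyFactor, ← pow_mul]
    ring
  have hat : q ^ (Kfun m k a ^ 2 - Kfun m k a) * x ^ (2 * Kfun m k a) *
      qBinom q (Kfun m k (a + 1) + 1) (Kfun m k a) = w a := by
    simp only [hw]
    rw [chainWeight, if_pos le_rfl, if_pos rfl, baileyFactor, ← pow_mul]
    ring
  have habove : ∏ i ∈ Finset.Ico (a + 1) m, q ^ (Kfun m k i ^ 2) * x ^ (2 * Kfun m k i) *
      qBinom q (Kfun m k (i + 1)) (Kfun m k i) = ∏ i ∈ Finset.Ico (a + 1) m, w i := by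
    refine Finset.prod_congr rfl fun i hi => ?_
    have hia : a < i := (Finset.mem_Ico.1 hi).1
    simp only [hw]
    rw [chainWeight, if_neg hia.not_ge, if_neg hia.ne', baileyFactor_mul, baileyFactor,
      ← pow_mul, mul_left_comm, pow_mul_pow_sub q (Nat.le_self_pow two_ne_zero _)]
    ring
  rw [Wterm, hbelow, hat, habove, mul_assoc _ _ (w a), mul_assoc, ← Finset.prod_range_succ,
    Finset.prod_range_mul_prod_Ico w ha, kernelTerm]

lemma tsum_baileyFactor_mul_qBinom_mul_baileySum (hq : ∀ n, qPoch q q n ≠ 0)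
    (hb : ∀ n, qPoch q b n ≠ 0) (α : ℕ → ℂ) (n : ℕ) :
    ∑' k, baileyFactor q b k * qBinom q n k * baileySum q b α k
      = baileySum q b (fun r => baileyFactor q b r * α r) n := by
  rw [← sum_baileyFactor_mul_qBinom_mul_baileySum hq hb]
  refine tsum_eq_sum fun k hk => ?_
  rw [qBinom_eq_zero_of_lt (by simpa using hk), mul_zero, zero_mul]

/-- The sequence to which `wellPoised q b (unitChain q b M)` is turned by the passage from `b` to
`b * q` in `baileySum_wellPoised_succ`, moved `N` further steps along the Bailey chain. -/
noncomputable def shiftedChain (q b : ℂ) (M N r : ℕ) : ℂ :=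
  baileyFactor q (b * q) r ^ N *
    ((unitChain q b M r * q ^ r + unitChain q b M (r + 1)) * qPoch q b r / (1 - b))

lemma baileyFactor_mul_shiftedChain (q b : ℂ) (M N r : ℕ) :
    baileyFactor q (b * q) r * shiftedChain q b M N r = shiftedChain q b M (N + 1) r := by
  rw [shiftedChain, shiftedChain, pow_succ', mul_assoc]

lemma iteratedKernelSum_chainWeight_of_le (hq : ∀ n, qPoch q q n ≠ 0)
    (hb : ∀ n, qPoch q b n ≠ 0) {a i : ℕ} (hi : i ≤ a) :
    iteratedKernelSum (chainWeight q b a) i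
      = baileySum q b (wellPoised q b (unitChain q b i)) := by
  induction i with
  | zero => rw [iteratedKernelSum, baileySum_unitChain_zero hq hb]
  | succ i ih =>
    funext n
    have hia : i < a := hi
    simp only [iteratedKernelSum, ih hia.le, chainWeight, hia.le, hia.ne, if_true, if_false]
    rw [tsum_baileyFactor_mul_qBinom_mul_baileySum hq hb]
    simp only [baileyFactor_mul_wellPoised_unitChain]

lemma iteratedKernelSum_chainWeight_add (hq : ∀ n, qPoch q q n ≠ 0)
    (hb : ∀ n, qPoch q b n ≠ 0) (a N : ℕ) :
    iteratedKernelSum (chainWeight q b a) (a + 1 + N)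
      = baileySum q (b * q) (shiftedChain q b (a + 1) N) := by
  induction N with
  | zero =>
    funext n
    simp only [iteratedKernelSum, iteratedKernelSum_chainWeight_of_le hq hb le_rfl, chainWeight,
      le_refl, if_true]
    rw [tsum_baileyFactor_mul_qBinom_mul_baileySum hq hb]
    simp only [baileyFactor_mul_wellPoised_unitChain, baileySum_wellPoised_succ hq hb]
    simp only [baileySum, shiftedChain, pow_zero, one_mul]
  | succ N ih =>
    funext n
    have hlt : a < a + 1 + N := by omega
    rw [← add_assoc]
    simp only [iteratedKernelSum, ih, chainWeight, hlt.not_ge, hlt.ne', if_false]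
    rw [tsum_baileyFactor_mul_qBinom_mul_baileySum hq (qPoch_mul_ne_zero hb)]
    simp only [baileyFactor_mul_shiftedChain]

lemma norm_unitChain_succ_le (hq : ‖q‖ ≤ 1) (hb : ‖b‖ ≤ 1) (M r : ℕ) :
    ‖unitChain q b (M + 1) r‖ ≤ ‖b‖ ^ r := by
  have hfactor := norm_baileyFactor_le (b := b) hq r
  have hpow : ‖baileyFactor q b r‖ ^ M ≤ 1 :=
    pow_le_one₀ (norm_nonneg _) (hfactor.trans (pow_le_one₀ (norm_nonneg b) hb))
  calc ‖unitChain q b (M + 1) r‖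
      = ‖q‖ ^ r.choose 2 * (‖baileyFactor q b r‖ ^ M * ‖baileyFactor q b r‖) := by
        simp [unitChain, pow_succ]
    _ ≤ 1 * (1 * ‖b‖ ^ r) := by
        gcongr
        exact pow_le_one₀ (norm_nonneg q) hq
    _ = ‖b‖ ^ r := by rw [one_mul, one_mul]

lemma summable_shiftedChain (hq : ‖q‖ < 1) (hb : ‖b‖ < 1) (M N : ℕ) :
    Summable (shiftedChain q b (M + 1) N) := by
  obtain ⟨A, hA⟩ := exists_norm_qPoch_le hq (qPoch_ne_zero hq.le hb)
  have hchain (r : ℕ) :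
      ‖unitChain q b (M + 1) r * q ^ r + unitChain q b (M + 1) (r + 1)‖ ≤ 2 * ‖b‖ ^ r := by
    have hfst : ‖unitChain q b (M + 1) r * q ^ r‖ ≤ ‖b‖ ^ r := by
      rw [norm_mul, norm_pow]
      exact (mul_le_of_le_one_right (norm_nonneg _) (pow_le_one₀ (norm_nonneg q) hq.le)).trans
        (norm_unitChain_succ_le hq.le hb.le M r)
    have hsnd := (norm_unitChain_succ_le hq.le hb.le M (r + 1)).trans
      (pow_le_pow_of_le_one (norm_nonneg b) hb.le r.le_succ)
    linarith [norm_add_le (unitChain q b (M + 1) r * q ^ r) (unitChain q b (M + 1) (r + 1))]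
  have hbq : ‖b * q‖ ≤ 1 := by
    rw [norm_mul]
    exact mul_le_one₀ hb.le (norm_nonneg q) hq.le
  refine .of_norm_bounded
    ((summable_geometric_of_lt_one (norm_nonneg b) hb).mul_left (2 * A / ‖1 - b‖)) fun r => ?_
  have hfactor : ‖baileyFactor q (b * q) r‖ ^ N ≤ 1 := pow_le_one₀ (norm_nonneg _)
    ((norm_baileyFactor_le hq.le r).trans (pow_le_one₀ (norm_nonneg _) hbq))
  calc ‖shiftedChain q b (M + 1) N r‖
      = ‖baileyFactor q (b * q) r‖ ^ N *
          (‖unitChain q b (M + 1) r * q ^ r + unitChain q b (M + 1) (r + 1)‖ * ‖qPoch q b r‖ /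
            ‖1 - b‖) := by
        rw [shiftedChain, norm_mul, norm_pow, norm_div, norm_mul]
    _ ≤ 1 * (2 * ‖b‖ ^ r * A / ‖1 - b‖) := by
        gcongr
        exacts [hchain r, hA r]
    _ = 2 * A / ‖1 - b‖ * ‖b‖ ^ r := by ring

end ChainWeight

section PartialTheta

variable {q x : ℂ}

/-- The summand of the partial theta series to which the series `∑' k, Wterm q x m a k` reduces,
with `M = a + 1` and `N = m - a - 1`. -/
noncomputable def thetaTerm (q x : ℂ) (M N r : ℕ) : ℂ :=
  (-1) ^ r * q ^ (r + 1).choose 2 * baileyFactor q (x ^ 2) r ^ M *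
    baileyFactor q (x ^ 2 * q) r ^ N * x ^ r * ∑ i ∈ Finset.range (2 * M), (x * q ^ r) ^ i

lemma thetaTerm_zero (q x : ℂ) (M N : ℕ) :
    thetaTerm q x M N 0 = ∑ i ∈ Finset.range (2 * M), x ^ i := by
  simp [thetaTerm, baileyFactor_zero]

lemma thetaTerm_succ (q x : ℂ) (M N r : ℕ) :
    thetaTerm q x M N (r + 1)
      = -(q ^ (N + 1) * x ^ (2 * (M + N) + 1)) * thetaTerm q (q * x) M N r := by
  have hsq : x ^ 2 * q ^ 2 = (q * x) ^ 2 := by ring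
  have hsq' : x ^ 2 * q * q ^ 2 = (q * x) ^ 2 * q := by ring
  have hgeom : x * q ^ (r + 1) = q * x * q ^ r := by ring
  simp only [thetaTerm, baileyFactor_succ, choose_succ_two (r + 1), hsq, hsq', hgeom]
  ring

lemma shiftedChain_mul_gaussSum (hq : ‖q‖ < 1) (hx : ‖x‖ < 1) (M N r : ℕ) :
    shiftedChain q (x ^ 2) M N r
        * ((1 - x ^ 2) * x ^ r / ((1 - x * q ^ r) * qPoch q (x ^ 2) r))
      = thetaTerm q x M N r := by
  have hx₂ := qPoch_ne_zero hq.le (norm_sq_lt_one hx)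
  have := hx₂ r
  have := one_sub_mul_pow_ne_zero (qPoch_ne_zero hq.le hx) r
  have : 1 - x ^ 2 ≠ 0 := by simpa using one_sub_mul_pow_ne_zero hx₂ 0
  have hgeom := geom_sum_mul_neg (x * q ^ r) (2 * M)
  have hpow : (x ^ 2 * q ^ (2 * r)) ^ M = (x * q ^ r) ^ (2 * M) := by ring
  rw [shiftedChain, unitChain_mul_pow_add_succ, hpow, ← hgeom, thetaTerm]
  field_simp

theorem hasSum_thetaTerm (hq : ‖q‖ < 1) (hx : ‖x‖ < 1) (a N : ℕ) :
    HasSum (thetaTerm q x (a + 1) N) (∑' k, Wterm q x (a + 1 + N) a k) := by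
  have hq₀ := qPoch_ne_zero hq.le hq
  have hgeom := summable_geometric_of_lt_one (norm_nonneg x) hx
  have hgeom₂ := summable_geometric_of_lt_one (norm_nonneg (x ^ 2)) (norm_sq_lt_one hx)
  obtain ⟨C, hC⟩ := exists_norm_chainWeight_le (b := x ^ 2) hq a
  obtain ⟨A, hA⟩ := exists_norm_qPoch_le hq (qPoch_ne_zero hq.le hx)
  have hkernel : Summable fun k => ‖C * (x ^ 2) ^ k‖ := by
    simpa only [norm_mul, norm_pow] using hgeom₂.mul_left ‖C‖
  have houter : Summable fun n => ‖qPoch q x n * x ^ n‖ := by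
    refine .of_nonneg_of_le (fun _ => norm_nonneg _) (fun n => ?_) (hgeom.mul_left A)
    rw [norm_mul, norm_pow]
    gcongr
    exact hA n
  have hsum := hasSum_mul_gaussSum hq hx (summable_shiftedChain hq (norm_sq_lt_one hx) a N)
  simp only [shiftedChain_mul_gaussSum hq hx] at hsum
  rwa [tsum_congr (Wterm_eq_kernelTerm hq₀ x (by omega)), tsum_kernelTerm hC hkernel houter,
    iteratedKernelSum_chainWeight_add hq₀ (qPoch_ne_zero hq.le (norm_sq_lt_one hx))]

theorem tsum_Wterm_eq (hq : ‖q‖ < 1) (hx : ‖x‖ < 1) (a N : ℕ) :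
    ∑' k, Wterm q x (a + 1 + N) a k
      = ∑ i ∈ Finset.range (2 * (a + 1)), x ^ i - q ^ (N + 1) * x ^ (2 * (a + 1 + N) + 1) *
        ∑' k, Wterm q (q * x) (a + 1 + N) a k := by
  have hqx : ‖q * x‖ < 1 := by
    rw [norm_mul]
    exact mul_lt_one_of_nonneg_of_lt_one_left (norm_nonneg q) hq hx.le
  have hhead := hasSum_thetaTerm hq hx a N
  have htail := (hasSum_thetaTerm hq hqx a N).mul_left
    (-(q ^ (N + 1) * x ^ (2 * (a + 1 + N) + 1)))
  simp only [← thetaTerm_succ] at htail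
  rw [← thetaTerm_zero q x (a + 1) N, sub_eq_add_neg, ← neg_mul, ← htail.tsum_eq,
    ← hhead.tsum_eq, hhead.summable.tsum_eq_zero_add]

end PartialTheta

lemma tsum_Wterm_eq_one_add {x : ℂ} (hx : x ≠ 0) (q : ℂ) (m a : ℕ) :
    ∑' k, Wterm q x m a k = 1 + x * Wfun q m a x := by
  rw [Wfun, mul_inv_cancel_left₀ hx, add_sub_cancel]

theorem stmt_10 (m a : ℕ) (hm : 1 ≤ m) (ha : a < m) (q x : ℂ)
    (hq : ‖q‖ < 1) (hx0 : 0 < ‖x‖) (hx : ‖x‖ < 1) :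
    Wfun q m a x
      = (∑ i ∈ Finset.range (2 * a + 1), x ^ i)
        - q ^ (m - a) * x ^ (2 * m)
        - q ^ (m - a + 1) * x ^ (2 * m + 1) * Wfun q m a (q * x) := by
  obtain ⟨N, rfl⟩ : ∃ N, m = a + 1 + N := Nat.exists_eq_add_of_le ha
  have hx_ne : x ≠ 0 := norm_pos_iff.1 hx0
  have hseries := tsum_Wterm_eq hq hx a N
  have hshifted : q ^ (N + 1) * ∑' k, Wterm q (q * x) (a + 1 + N) a k
      = q ^ (N + 1) * (1 + q * x * Wfun q (a + 1 + N) a (q * x)) := by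
    rcases eq_or_ne q 0 with rfl | hq_ne
    · simp
    · rw [tsum_Wterm_eq_one_add (mul_ne_zero hq_ne hx_ne)]
  rw [tsum_Wterm_eq_one_add hx_ne, show 2 * (a + 1) = 2 * a + 1 + 1 by ring, geom_sum_succ]
    at hseries
  rw [show a + 1 + N - a = N + 1 by omega]
  apply mul_left_cancel₀ hx_ne
  linear_combination hseries - x ^ (2 * (a + 1 + N) + 1) * hshifted
end

section
/- Let N be a positive integer and ω = exp(2πi/N). Then Σ_{0 ≤ k₁ ≤ k₂ ≤ N−1} (ω;ω)_{k₂} · ω^{k₁²+k₁} · [k₂ choose k₁]_ω = Σ_{a,b ≥ 0, a+b ≤ N−1} (ω;ω)_{a+b} · ω^{−ab}. (The right-hand side is Kashaev's invariant of the (5,2)-torus knot at the N-th root of unity; the left-hand side is the value X₂⁽⁰⁾(ω) of the q-series X₂⁽⁰⁾(q) = Σ_{n≥0} Σ_{c=0}^n (q;q)_n q^{c²+c} [n choose c]_q at q = ω, where all terms with n ≥ N vanish.) -/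
/-!
Put `φ_m(i) = ∑_c q^(c² + c + ci) [m choose c]`, so that the left-hand side is `∑_n (q;q)_n φ_n(0)`.
Pascal's rule gives `φ_{m+1}(i) = φ_m(i) + q^(m+i+2) φ_m(i+1)`. Let
`G_n = ∑ q^(-ij) φ_m(i)` over `i + j + m = n` with `i ≥ 1`. Multiplying `G_{n+1}` by `q^(n+2)`
lets Pascal's rule absorb the factor, and the result is
`(1 - q^(n+2)) G_{n+1} = G_n + ∑_{a+b=n+1} q^(-ab) - φ_{n+1}(0)`.
Weighted by `(q;q)_{n+1}` this telescopes: for every invertible `q` the right-hand side exceeds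
the left-hand side by `(q;q)_N G_{N-1}`, and `(q;q)_N = 0` when `q^N = 1`.
-/

open Finset Finset.Nat

section GaussBinom

variable {R : Type*}

/-- The Gaussian binomial coefficient `[n choose c]_q` over an arbitrary semiring, by Pascal's rule
rather than as a quotient, so that it makes sense at roots of unity. The exponent `n - c` is
truncated only where it multiplies `0`. -/
def gaussBinom [Semiring R] (q : R) : ℕ → ℕ → R
  | _, 0 => 1
  | 0, _ + 1 => 0
  | n + 1, c + 1 => gaussBinom q n (c + 1) + q ^ (n - c) * gaussBinom q n c

/-- The finite q-Pochhammer symbol `(x;q)_n` over an arbitrary commutative ring; over `ℂ` it unfolds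
to `qPoch`. -/
def qPochhammer [CommRing R] (q x : R) (n : ℕ) : R := ∏ i ∈ range n, (1 - x * q ^ i)

section Semiring

variable [Semiring R] (q : R)

@[simp]
theorem gaussBinom_zero_right (n : ℕ) : gaussBinom q n 0 = 1 := by
  cases n <;> rfl

theorem gaussBinom_succ_succ (n c : ℕ) :
    gaussBinom q (n + 1) (c + 1) = gaussBinom q n (c + 1) + q ^ (n - c) * gaussBinom q n c :=
  rfl

theorem gaussBinom_eq_zero_of_lt {n c : ℕ} (h : n < c) : gaussBinom q n c = 0 := by
  induction n generalizing c with
  | zero =>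
    obtain ⟨c, rfl⟩ := Nat.exists_eq_add_of_lt h
    rfl
  | succ n ih =>
    obtain ⟨c, rfl⟩ := Nat.exists_eq_succ_of_ne_zero (Nat.ne_zero_of_lt h)
    rw [gaussBinom_succ_succ, ih (by lia), ih (by lia), mul_zero, add_zero]

@[simp]
theorem gaussBinom_self (n : ℕ) : gaussBinom q n n = 1 := by
  induction n with
  | zero => rfl
  | succ n ih => simp [gaussBinom_succ_succ, gaussBinom_eq_zero_of_lt q n.lt_succ_self, ih]

end Semiring

section CommRing

variable [CommRing R] (q : R)

@[simp]
theorem qPochhammer_zero (x : R) : qPochhammer q x 0 = 1 :=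
  prod_range_zero _

theorem qPochhammer_succ (x : R) (n : ℕ) :
    qPochhammer q x (n + 1) = qPochhammer q x n * (1 - x * q ^ n) :=
  prod_range_succ _ _

theorem qPochhammer_self_succ (n : ℕ) :
    qPochhammer q q (n + 1) = qPochhammer q q n * (1 - q ^ (n + 1)) := by
  rw [qPochhammer_succ, pow_succ']

theorem gaussBinom_add_mul_qPochhammer_mul_qPochhammer (c d : ℕ) :
    gaussBinom q (c + d) c * (qPochhammer q q c * qPochhammer q q d) = qPochhammer q q (c + d) := by
  induction c generalizing d with
  | zero => simp
  | succ c ihc =>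
    induction d with
    | zero => simp
    | succ d ihd =>
      have hc := ihc (d + 1)
      rw [show c + (d + 1) = c + 1 + d by ring] at hc
      have pascal : gaussBinom q (c + 1 + d + 1) (c + 1) =
          gaussBinom q (c + 1 + d) (c + 1) + q ^ (d + 1) * gaussBinom q (c + 1 + d) c := by
        rw [gaussBinom_succ_succ, show c + 1 + d - c = d + 1 by lia]
      rw [← add_assoc, pascal, qPochhammer_self_succ q (c + 1 + d)]
      rw [qPochhammer_self_succ q c] at ihd ⊢
      rw [qPochhammer_self_succ q d] at hc ⊢
      linear_combination (1 - q ^ (d + 1)) * ihd + q ^ (d + 1) * (1 - q ^ (c + 1)) * hc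

end CommRing

end GaussBinom

theorem qPoch_mul_qBinom (q : ℂ) (n c : ℕ) :
    qPoch q q n * qBinom q n c = qPoch q q n * gaussBinom q n c := by
  by_cases hn : qPoch q q n = 0
  · simp [hn]
  congr 1
  rcases lt_or_ge n c with h | h
  · rw [gaussBinom_eq_zero_of_lt q h, qBinom, if_neg h.not_ge]
  · obtain ⟨d, rfl⟩ := Nat.exists_eq_add_of_le h
    have key : gaussBinom q (c + d) c * (qPoch q q c * qPoch q q d) = qPoch q q (c + d) :=
      gaussBinom_add_mul_qPochhammer_mul_qPochhammer q c d
    have hcd : qPoch q q c * qPoch q q d ≠ 0 := right_ne_zero_of_mul (key.trans_ne hn)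
    rw [qBinom, if_pos h, Nat.add_sub_cancel_left, div_eq_iff hcd, key]

theorem sum_antidiagonal_snd_succ_sub {M : Type*} [AddCommGroup M] (f : ℕ → M) (n : ℕ) :
    ∑ p ∈ antidiagonal n, (f (p.2 + 1) - f p.2) = f (n + 1) - f 0 := by
  have h := (sum_antidiagonal_succ (n := n) (f := fun p => f p.2)).symm.trans sum_antidiagonal_succ'
  rw [sum_sub_distrib, sub_eq_sub_iff_add_eq_add, add_comm, ← h, add_comm]

section TwistedSums

variable {R : Type*}

/-- The sum `φ_m(i) = ∑_c q^(c² + c + ci) [m choose c]_q`. At `i = 0` it is the inner sum of the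
`q`-series `X₂⁽⁰⁾`; the twist `i` makes it closed under Pascal's rule. -/
def twistedSum [Semiring R] (q : R) (m i : ℕ) : R :=
  ∑ c ∈ range (m + 1), q ^ (c ^ 2 + c + c * i) * gaussBinom q m c

/-- The sum `C_t(j) = ∑_{i+m=t} r^(ij) φ_m(i)`, to be used with `r = q⁻¹`. -/
def diagonalSum [Semiring R] (q r : R) (t j : ℕ) : R :=
  ∑ p ∈ antidiagonal t, r ^ (p.1 * j) * twistedSum q p.2 p.1

/-- The sum `G_n = ∑_{j+t=n} (C_t(j) - φ_t(0))`, the antiderivative in the telescoping argument.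
Subtracting `φ_t(0)` removes the term `i = 0` of `C_t(j)`. -/
def telescopingSum [Ring R] (q r : R) (n : ℕ) : R :=
  ∑ p ∈ antidiagonal n, (diagonalSum q r p.2 p.1 - twistedSum q p.2 0)

@[simp]
theorem twistedSum_zero [Semiring R] (q : R) (i : ℕ) : twistedSum q 0 i = 1 := by
  simp [twistedSum]

theorem twistedSum_succ [CommSemiring R] (q : R) (m i : ℕ) :
    twistedSum q (m + 1) i = twistedSum q m i + q ^ (m + i + 2) * twistedSum q m (i + 1) := by
  have extend : twistedSum q m i =
      ∑ c ∈ range (m + 2), q ^ (c ^ 2 + c + c * i) * gaussBinom q m c := by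
    rw [sum_range_succ, gaussBinom_eq_zero_of_lt q m.lt_succ_self, mul_zero, add_zero, twistedSum]
  rw [extend, twistedSum, twistedSum, sum_range_succ', sum_range_succ' _ (m + 1), mul_sum,
    gaussBinom_zero_right, gaussBinom_zero_right, add_right_comm (Finset.sum _ _),
    ← sum_add_distrib]
  congr 1
  refine sum_congr rfl fun c hc => ?_
  obtain ⟨d, rfl⟩ := Nat.exists_eq_add_of_le (mem_range_succ_iff.mp hc)
  rw [gaussBinom_succ_succ, Nat.add_sub_cancel_left]
  ring

@[simp]
theorem diagonalSum_zero [Semiring R] (q r : R) (j : ℕ) : diagonalSum q r 0 j = 1 := by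
  simp [diagonalSum]

@[simp]
theorem telescopingSum_zero [Ring R] (q r : R) : telescopingSum q r 0 = 0 := by
  simp [telescopingSum]

theorem telescopingSum_succ_eq [Ring R] (q r : R) (n : ℕ) :
    telescopingSum q r (n + 1) =
      ∑ p ∈ antidiagonal n, (diagonalSum q r (p.2 + 1) p.1 - twistedSum q (p.2 + 1) 0) := by
  simp [telescopingSum, sum_antidiagonal_succ']

variable [CommRing R] {q r : R}

theorem pow_mul_diagonalSum_succ_sub (hqr : q * r = 1) (t j : ℕ) :
    q ^ (j + t + 2) * (diagonalSum q r (t + 1) j - twistedSum q (t + 1) 0) =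
      diagonalSum q r (t + 1) j - diagonalSum q r t j - r ^ (j * (t + 1)) := by
  have drop_first : diagonalSum q r (t + 1) j - twistedSum q (t + 1) 0 =
      ∑ p ∈ antidiagonal t, r ^ ((p.1 + 1) * j) * twistedSum q p.2 (p.1 + 1) := by
    simp [diagonalSum, sum_antidiagonal_succ]
  have drop_last : diagonalSum q r (t + 1) j - r ^ (j * (t + 1)) =
      ∑ p ∈ antidiagonal t, r ^ (p.1 * j) * twistedSum q (p.2 + 1) p.1 := by
    simp [diagonalSum, sum_antidiagonal_succ', mul_comm]
  rw [drop_first, sub_right_comm, drop_last, diagonalSum, ← sum_sub_distrib, mul_sum]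
  refine sum_congr rfl fun ⟨i, m⟩ him => ?_
  obtain rfl : i + m = t := mem_antidiagonal.mp him
  have cancel : q ^ j * r ^ j = 1 := by rw [← mul_pow, hqr, one_pow]
  rw [twistedSum_succ]
  linear_combination q ^ (m + i + 2) * r ^ (i * j) * twistedSum q m (i + 1) * cancel

theorem one_sub_pow_mul_telescopingSum_succ (hqr : q * r = 1) (n : ℕ) :
    (1 - q ^ (n + 2)) * telescopingSum q r (n + 1) =
      telescopingSum q r n +
        (∑ p ∈ antidiagonal (n + 1), r ^ (p.1 * p.2) - twistedSum q (n + 1) 0) := by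
  have termwise : ∀ p ∈ antidiagonal n,
      (1 - q ^ (n + 2)) * (diagonalSum q r (p.2 + 1) p.1 - twistedSum q (p.2 + 1) 0) =
        (diagonalSum q r p.2 p.1 - twistedSum q p.2 0) + r ^ (p.1 * (p.2 + 1)) -
          (twistedSum q (p.2 + 1) 0 - twistedSum q p.2 0) := by
    rintro ⟨j, t⟩ hjt
    obtain rfl : j + t = n := mem_antidiagonal.mp hjt
    linear_combination -pow_mul_diagonalSum_succ_sub hqr t j
  have kashaev_terms : ∑ p ∈ antidiagonal (n + 1), r ^ (p.1 * p.2) =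
      1 + ∑ p ∈ antidiagonal n, r ^ (p.1 * (p.2 + 1)) := by
    simp [sum_antidiagonal_succ']
  rw [telescopingSum_succ_eq, mul_sum, sum_congr rfl termwise, sum_sub_distrib, sum_add_distrib,
    sum_antidiagonal_snd_succ_sub (twistedSum q · 0), kashaev_terms, twistedSum_zero,
    telescopingSum]
  ring

theorem sum_qPochhammer_mul_sub (hqr : q * r = 1) (N : ℕ) :
    ∑ n ∈ range (N + 1), qPochhammer q q n *
        (∑ p ∈ antidiagonal n, r ^ (p.1 * p.2) - twistedSum q n 0) =
      qPochhammer q q (N + 1) * telescopingSum q r N := by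
  induction N with
  | zero => simp
  | succ N ih =>
    rw [sum_range_succ, ih, qPochhammer_self_succ q (N + 1), mul_assoc,
      one_sub_pow_mul_telescopingSum_succ hqr, mul_add]

end TwistedSums

theorem stmt_18_general {R : Type*} [CommRing R] {N : ℕ} {q r : R} (hqr : q * r = 1)
    (hq : q ^ N = 1) :
    ∑ k₂ ∈ range N, ∑ k₁ ∈ range (k₂ + 1),
        qPochhammer q q k₂ * q ^ (k₁ ^ 2 + k₁) * gaussBinom q k₂ k₁ =
      ∑ a ∈ range N, ∑ b ∈ range (N - a), qPochhammer q q (a + b) * r ^ (a * b) := by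
  have inner_left (n : ℕ) : ∑ c ∈ range (n + 1),
      qPochhammer q q n * q ^ (c ^ 2 + c) * gaussBinom q n c =
        qPochhammer q q n * twistedSum q n 0 := by
    simp [twistedSum, mul_sum, mul_assoc]
  have inner_right (n : ℕ) : ∑ a ∈ range (n + 1),
      qPochhammer q q (a + (n - a)) * r ^ (a * (n - a)) =
        qPochhammer q q n * ∑ p ∈ antidiagonal n, r ^ (p.1 * p.2) := by
    rw [← sum_antidiagonal_eq_sum_range_succ (fun a b => qPochhammer q q (a + b) * r ^ (a * b)),
      mul_sum]
    exact sum_congr rfl fun p hp => by rw [mem_antidiagonal.mp hp]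
  rw [← sum_range_diag_flip N fun a b => qPochhammer q q (a + b) * r ^ (a * b)]
  simp only [inner_left, inner_right]
  rw [eq_comm, ← sub_eq_zero, ← sum_sub_distrib]
  simp only [← mul_sub]
  cases N with
  | zero => simp
  | succ N =>
    rw [sum_qPochhammer_mul_sub hqr, qPochhammer_self_succ, hq, sub_self, mul_zero, zero_mul]

theorem stmt_18 (N : ℕ) (hN : 0 < N) (ω : ℂ)
    (hω : ω = Complex.exp (2 * Real.pi * Complex.I / N)) :
    ∑ k₂ ∈ Finset.range N, ∑ k₁ ∈ Finset.range (k₂ + 1),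
        qPoch ω ω k₂ * ω ^ (k₁ ^ 2 + k₁) * qBinom ω k₂ k₁
      = ∑ a ∈ Finset.range N, ∑ b ∈ Finset.range (N - a),
          qPoch ω ω (a + b) * ω ^ (-((a : ℤ) * (b : ℤ))) := by
  have hωN : ω ^ N = 1 := hω ▸ (Complex.isPrimitiveRoot_exp N hN.ne').pow_eq_one
  have hω_inv : ω * ω⁻¹ = 1 := mul_inv_cancel₀ (hω ▸ Complex.exp_ne_zero _)
  have binom_term (n c : ℕ) : qPoch ω ω n * ω ^ (c ^ 2 + c) * qBinom ω n c =
      qPochhammer ω ω n * ω ^ (c ^ 2 + c) * gaussBinom ω n c := by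
    rw [mul_right_comm, qPoch_mul_qBinom, mul_right_comm]
    rfl
  have inv_pow_term (a b : ℕ) : ω ^ (-((a : ℤ) * (b : ℤ))) = ω⁻¹ ^ (a * b) := by
    rw [zpow_neg, inv_pow, ← Nat.cast_mul, zpow_natCast]
  simp only [binom_term, inv_pow_term]
  exact stmt_18_general hω_inv hωN
end
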